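/- Let D be a non-dictatorial, unidimensional domain and fix n ≥ 2. The following are equivalent: (1) there exists an anonymous, tops-only and strategy-proof rule f : D^n → A; (2) D is a semi-single-peaked domain; (3) there exist a tree T on A and x̄ ∈ A such that the projection rule f : D^n → A on T w.r.t. x̄ is strategy-proof. -/

import Mathlib

open Classical

set_option linter.unusedSectionVars false
set_option linter.unusedVariables false

/-- A strict preference over `A`, represented as a ranking bijection:
`P k` is the `(k+1)`-th ranked alternative. -/
abbrev Pref (A : Type*) [Fintype A] := Fin (Fintype.card A) ≃ A

variable {A : Type*} [Fintype A] [DecidableEq A] [Nonempty A]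

/-- `rk P k` : the `(k+1)`-th ranked alternative of `P` (0-indexed, so `rk P 0 = r₁(P)`). -/
noncomputable def rk (P : Pref A) (k : ℕ) : A :=
  if h : k < Fintype.card A then P ⟨k, h⟩ else Classical.arbitrary A

/-- The peak `r₁(P)`. -/
noncomputable def peak (P : Pref A) : A := rk P 0

/-- The second-ranked alternative `r₂(P)`. -/
noncomputable def second (P : Pref A) : A := rk P 1

/-- `a` is strictly preferred to `b` under `P`. -/
def prefers (P : Pref A) (a b : A) : Prop := P.symm a < P.symm b

/-- Two preferences are completely reversed. -/
def Reversed (P P' : Pref A) : Prop := ∀ a b : A, prefers P a b ↔ prefers P' b a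

/-- A profile lies in the domain `D`. -/
def InDom (D : Set (Pref A)) {n : ℕ} (P : Fin n → Pref A) : Prop := ∀ i, P i ∈ D

/-- Unanimity (an SCF satisfying it is called a rule). -/
def IsRule (D : Set (Pref A)) {n : ℕ} (f : (Fin n → Pref A) → A) : Prop :=
  ∀ P : Fin n → Pref A, InDom D P → ∀ a : A, (∀ i, peak (P i) = a) → f P = a

/-- Strategy-proofness (relative to the domain `D`). -/
def StrategyProof (D : Set (Pref A)) {n : ℕ} (f : (Fin n → Pref A) → A) : Prop :=
  ∀ P : Fin n → Pref A, InDom D P → ∀ i : Fin n, ∀ Q ∈ D,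
    f P = f (Function.update P i Q) ∨ prefers (P i) (f P) (f (Function.update P i Q))

/-- The tops-only property. -/
def TopsOnly (D : Set (Pref A)) {n : ℕ} (f : (Fin n → Pref A) → A) : Prop :=
  ∀ P P' : Fin n → Pref A, InDom D P → InDom D P' →
    (∀ i, peak (P i) = peak (P' i)) → f P = f P'

/-- Anonymity. -/
def Anonymous (D : Set (Pref A)) {n : ℕ} (f : (Fin n → Pref A) → A) : Prop :=
  ∀ P : Fin n → Pref A, InDom D P → ∀ σ : Equiv.Perm (Fin n), f (P ∘ σ) = f P

/-- `f` behaves like a dictatorship on `B`. -/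
def DictatorOn (D : Set (Pref A)) {n : ℕ} (f : (Fin n → Pref A) → A) (B : Set A) : Prop :=
  ∃ i : Fin n, ∀ P : Fin n → Pref A, InDom D P → (∀ j, peak (P j) ∈ B) → f P = peak (P i)

/-- `f` is a dictatorship. -/
def Dictatorship (D : Set (Pref A)) {n : ℕ} (f : (Fin n → Pref A) → A) : Prop :=
  DictatorOn D f Set.univ

/-- A dictatorial domain. -/
def DictatorialDomain (D : Set (Pref A)) : Prop :=
  ∀ n : ℕ, 2 ≤ n → ∀ f : (Fin n → Pref A) → A,
    IsRule D f → StrategyProof D f → Dictatorship D f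

/-- A tops-only domain. -/
def TopsOnlyDomain (D : Set (Pref A)) : Prop :=
  ∀ n : ℕ, 2 ≤ n → ∀ f : (Fin n → Pref A) → A,
    IsRule D f → StrategyProof D f → TopsOnly D f

/-- Adjacency of two alternatives relative to the domain `D`. -/
def DomAdjacent (D : Set (Pref A)) (a b : A) : Prop :=
  ∃ P ∈ D, ∃ P' ∈ D, peak P = a ∧ second P = b ∧ peak P' = b ∧ second P' = a ∧
    ∀ k : ℕ, 2 ≤ k → rk P k = rk P' k

/-- The adjacency graph `G_∼` of the domain `D`. -/
noncomputable def adjGraph (D : Set (Pref A)) : SimpleGraph A :=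
  SimpleGraph.fromRel (DomAdjacent D)

/-- Path-connectedness of the domain. -/
def PathConnectedDom (D : Set (Pref A)) : Prop := (adjGraph D).Connected

/-- Diversity: the domain contains two completely reversed preferences. -/
def Diversity (D : Set (Pref A)) : Prop := ∃ P ∈ D, ∃ P' ∈ D, Reversed P P'

/-- `S(D^a)`: the set of alternatives second-ranked in some preference of `D` with peak `a`. -/
def secondsSet (D : Set (Pref A)) (a : A) : Set A := {b | ∃ P ∈ D, peak P = a ∧ second P = b}

/-- Leaf symmetry. -/
def LeafSymmetry (D : Set (Pref A)) : Prop :=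
  ∀ x : A, (∃! y, (adjGraph D).Adj x y) →
    (∃ u ∈ secondsSet D x, ∃ v ∈ secondsSet D x, u ≠ v) →
    ∃ z ∈ secondsSet D x, ¬ (adjGraph D).Adj x z ∧ x ∈ secondsSet D z

/-- Unidimensionality: path-connectedness, diversity and leaf symmetry. -/
def Unidimensional (D : Set (Pref A)) : Prop :=
  PathConnectedDom D ∧ Diversity D ∧ LeafSymmetry D

/-- The unique seconds property. -/
def UniqueSeconds (D : Set (Pref A)) : Prop := ∃ x b : A, secondsSet D x = {b}

/-- Minimal richness. -/
def MinimallyRich (D : Set (Pref A)) : Prop := ∀ a : A, ∃ P ∈ D, peak P = a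

/-- The vertex set `⟨x, y|T⟩` of the (in a tree, unique) shortest path between `x` and `y`. -/
def intv (T : SimpleGraph A) (x y : A) : Set A :=
  {z | T.dist x z + T.dist z y = T.dist x y}

/-- `a'` is the projection of `a` onto `B` in `T`. -/
def IsProjPt (T : SimpleGraph A) (B : Set A) (a a' : A) : Prop :=
  a' ∈ B ∧ ∀ b ∈ B, a' ∈ intv T a b

/-- The projection `Proj(a, B)` of `a` onto a path-closed set `B` in the tree `T`. -/
noncomputable def projOn (T : SimpleGraph A) (B : Set A) (a : A) : A :=
  if h : ∃ a', IsProjPt T B a a' then h.choose else a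

/-- `Γ(P)`: the vertex set of the minimal subtree of `T` spanning all the peaks. -/
def gammaSet (T : SimpleGraph A) {n : ℕ} (P : Fin n → Pref A) : Set A :=
  {c | ∃ i j : Fin n, c ∈ intv T (peak (P i)) (peak (P j))}

/-- The projection rule on `T` w.r.t. `xbar`. -/
noncomputable def projRule (T : SimpleGraph A) (xbar : A) {n : ℕ}
    (P : Fin n → Pref A) : A :=
  projOn T (gammaSet T P) xbar

/-- Single-peakedness on a tree. -/
def SinglePeaked (T : SimpleGraph A) (P : Pref A) : Prop :=
  ∀ c d : A, c ≠ d → c ∈ intv T (peak P) d → prefers P c d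

/-- Semi-single-peakedness on `T` w.r.t. the threshold `xbar`. -/
def SemiSP (T : SimpleGraph A) (xbar : A) (P : Pref A) : Prop :=
  (∀ c d : A, c ∈ intv T (peak P) xbar → d ∈ intv T (peak P) xbar → c ≠ d →
    c ∈ intv T (peak P) d → prefers P c d) ∧
  (∀ c : A, c ∉ intv T (peak P) xbar →
    prefers P (projOn T (intv T (peak P) xbar) c) c)

/-- A semi-single-peaked domain. -/
def SemiSPDomain (D : Set (Pref A)) : Prop :=
  ∃ (T : SimpleGraph A) (xbar : A), T.IsTree ∧
    D ⊆ {P | SemiSP T xbar P} ∧ (adjGraph D).Connected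

/-- `A^{a⇀b}`: the alternatives whose path to `b` goes through `a`. -/
def sideSet (T : SimpleGraph A) (a b : A) : Set A := {z | a ∈ intv T z b}

/-- `x = max^P(B)`: `x` is `P`'s best alternative of `B`. -/
def IsBestOf (P : Pref A) (x : A) (B : Set A) : Prop :=
  x ∈ B ∧ ∀ y ∈ B, y ≠ x → prefers P x y

/-- `a` and `b` are dual-thresholds in the tree `T`. -/
def DualThresholds (T : SimpleGraph A) (a b : A) : Prop :=
  a ≠ b ∧ ∀ c : A, c ∉ intv T a b →
    projOn T (intv T a b) c = a ∨ projOn T (intv T a b) c = b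

/-- An `(a,b)`-semi-hybrid preference on `T`. -/
def SemiHybridPref (T : SimpleGraph A) (a b : A) (P : Pref A) : Prop :=
  (peak P ∈ sideSet T a b \ {a} → SemiSP T a P ∧ IsBestOf P b (sideSet T b a)) ∧
  (peak P ∈ sideSet T b a \ {b} → SemiSP T b P ∧ IsBestOf P a (sideSet T a b)) ∧
  (peak P ∈ intv T a b → IsBestOf P a (sideSet T a b) ∧ IsBestOf P b (sideSet T b a))

/-- `x` is a leaf of the subgraph of `G` induced on `B`. -/
def IsLeafOn (G : SimpleGraph A) (B : Set A) (x : A) : Prop :=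
  x ∈ B ∧ ∃! y, y ∈ B ∧ G.Adj x y

/-- `D` is an `(a,b)`-semi-hybrid domain on the tree `T`. -/
def SemiHybridDomainOn (D : Set (Pref A)) (T : SimpleGraph A) (a b : A) : Prop :=
  T.IsTree ∧ DualThresholds T a b ∧ D ⊆ {P | SemiHybridPref T a b P} ∧
  (adjGraph D).Connected ∧
  (¬ ∃ (T' : SimpleGraph A) (a' b' : A), T'.IsTree ∧ DualThresholds T' a' b' ∧
      D ⊆ {P | SemiHybridPref T' a' b' P} ∧ intv T' a' b' ⊂ intv T a b) ∧
  ((adjGraph D).IsTree →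
    ∀ x : A, IsLeafOn (adjGraph D) (intv T a b) x →
      ∃ P ∈ D, ¬ SemiSP (adjGraph D) x P)

/-- `D` is a semi-hybrid domain. -/
def SemiHybridDomain (D : Set (Pref A)) : Prop :=
  ∃ (T : SimpleGraph A) (a b : A), SemiHybridDomainOn D T a b

/-- An `(a,b)`-hybrid preference on `T`. -/
def HybridPref (T : SimpleGraph A) (a b : A) (P : Pref A) : Prop :=
  (∀ y z : A, ((y ∈ sideSet T a b ∧ z ∈ sideSet T a b) ∨
      (y ∈ sideSet T b a ∧ z ∈ sideSet T b a)) → y ≠ z →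
    y ∈ intv T (peak P) z → prefers P y z) ∧
  (peak P ∈ sideSet T a b \ {a} → IsBestOf P a (intv T a b)) ∧
  (peak P ∈ sideSet T b a \ {b} → IsBestOf P b (intv T a b))

/-- `D` is an `(a,b)`-hybrid domain on the tree `T`. -/
def HybridDomainOn (D : Set (Pref A)) (T : SimpleGraph A) (a b : A) : Prop :=
  T.IsTree ∧ DualThresholds T a b ∧ D ⊆ {P | HybridPref T a b P} ∧
  (adjGraph D).Connected ∧
  (¬ ∃ (T' : SimpleGraph A) (a' b' : A), T'.IsTree ∧ DualThresholds T' a' b' ∧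
      D ⊆ {P | HybridPref T' a' b' P} ∧ intv T' a' b' ⊂ intv T a b) ∧
  3 ≤ (intv T a b).ncard

/-- `f` is an `(a,b)`-hybrid rule on the tree `T`. -/
def IsHybridRule (D : Set (Pref A)) {n : ℕ} (f : (Fin n → Pref A) → A)
    (T : SimpleGraph A) (a b : A) : Prop :=
  T.IsTree ∧ DualThresholds T a b ∧ 3 ≤ (intv T a b).ncard ∧
  ∃ i : Fin n, ∀ P : Fin n → Pref A, InDom D P →
    (peak (P i) ∈ intv T a b → f P = peak (P i)) ∧
    (peak (P i) ∈ sideSet T a b \ {a} → f P = projOn T (gammaSet T P) a) ∧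
    (peak (P i) ∈ sideSet T b a \ {b} → f P = projOn T (gammaSet T P) b)

/-- The PNT rule on `T` w.r.t. the edge `(x, y)`, with the two distinguished voters `i, j`. -/
noncomputable def pntRule (T : SimpleGraph A) (x y : A) {n : ℕ} (i j : Fin n)
    (P : Fin n → Pref A) : A :=
  if peak (P i) ∈ sideSet T y x then peak (P i)
  else if peak (P j) ∈ sideSet T x y then projOn T (gammaSet T P) x
  else if prefers (P j) x y then x else y

/-- `(x, y)` is a critical spot in `T` for the domain `D`. -/
def CriticalSpot (D : Set (Pref A)) (T : SimpleGraph A) (x y : A) : Prop :=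
  T.Adj x y ∧
  (∀ P ∈ D, peak P ∈ sideSet T x y → SemiSP T y P) ∧
  (∀ P ∈ D, peak P ∈ sideSet T y x → IsBestOf P x (sideSet T x y)) ∧
  (∃ P ∈ D, ∃ P' ∈ D, peak P = peak P' ∧ peak P ∈ sideSet T y x ∧
    prefers P y x ∧ prefers P' x y)

/-- `x` is a path in the graph `G` (pairwise distinct, consecutive vertices adjacent). -/
def IsPathIn (G : SimpleGraph A) {v : ℕ} (x : Fin v → A) : Prop :=
  Function.Injective x ∧
  ∀ (k : ℕ) (h : k + 1 < v), G.Adj (x ⟨k, Nat.lt_of_succ_lt h⟩) (x ⟨k + 1, h⟩)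

/-- `x` is a cycle in the graph `G`. -/
def IsCycleIn (G : SimpleGraph A) {v : ℕ} (x : Fin v → A) : Prop :=
  Function.Injective x ∧
  (∀ (k : ℕ) (h : k + 1 < v), G.Adj (x ⟨k, Nat.lt_of_succ_lt h⟩) (x ⟨k + 1, h⟩)) ∧
  ∀ (h : 0 < v), G.Adj (x ⟨v - 1, Nat.sub_lt h Nat.one_pos⟩) (x ⟨0, h⟩)

/-- The line `L^A` induced by the ranking of the preference `P`. -/
noncomputable def lineOf (P : Pref A) : SimpleGraph A :=
  SimpleGraph.fromRel (fun a b =>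
    ∃ k : ℕ, k + 1 < Fintype.card A ∧ rk P k = a ∧ rk P (k + 1) = b)

/-- The median of three natural numbers. -/
def med3 (a b c : ℕ) : ℕ := max (min a b) (min (max a b) c)

/-- The two-voter profile in which voter `i` reports `Pi` and the other voter reports `Q`. -/
noncomputable def prof2 (i : Fin 2) (Pi Q : Pref A) : Fin 2 → Pref A :=
  Function.update (fun _ => Q) i Pi

/-! ### Geometry of graph intervals -/

lemma mem_intv_iff {T : SimpleGraph A} {x y z : A} :
    z ∈ intv T x y ↔ T.dist x z + T.dist z y = T.dist x y := Iff.rfl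

lemma intv_comm {T : SimpleGraph A} (x y : A) : intv T x y = intv T y x := by
  ext z
  simp only [mem_intv_iff]
  rw [T.dist_comm (u := x) (v := z), T.dist_comm (u := z) (v := y), T.dist_comm (u := x) (v := y)]
  omega

lemma intv_symm {T : SimpleGraph A} {x y z : A} (h : z ∈ intv T x y) : z ∈ intv T y x := by
  rwa [intv_comm]

lemma left_mem_intv (T : SimpleGraph A) (x y : A) : x ∈ intv T x y := by
  simp [mem_intv_iff]

lemma right_mem_intv (T : SimpleGraph A) (x y : A) : y ∈ intv T x y := by
  simp [mem_intv_iff]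

/-- `z` between `x,y` and `w` between `z,y` gives `w` between `x,y`. -/
lemma intv_trans {T : SimpleGraph A} (hT : T.Connected) {x y z w : A}
    (h1 : z ∈ intv T x y) (h2 : w ∈ intv T z y) : w ∈ intv T x y ∧ z ∈ intv T x w := by
  simp only [mem_intv_iff] at *
  have a := hT.dist_triangle (u := x) (v := z) (w := w)
  have b := hT.dist_triangle (u := x) (v := w) (w := y)
  constructor <;> omega

/-- `z` between `x,y` and `w` between `x,z` gives `w` between `x,y`. -/
lemma intv_trans' {T : SimpleGraph A} (hT : T.Connected) {x y z w : A}
    (h1 : z ∈ intv T x y) (h2 : w ∈ intv T x z) : w ∈ intv T x y ∧ z ∈ intv T w y := by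
  have := intv_trans hT (intv_symm h1) (intv_symm h2)
  exact ⟨intv_symm this.1, intv_symm this.2⟩

lemma intv_antisymm {T : SimpleGraph A} (hT : T.Connected) {x a b : A}
    (h1 : a ∈ intv T x b) (h2 : b ∈ intv T x a) : a = b := by
  simp only [mem_intv_iff] at *
  have : T.dist a b = 0 := by omega
  exact hT.dist_eq_zero_iff.mp this

lemma intv_self {T : SimpleGraph A} (hT : T.Connected) {x a : A}
    (h : a ∈ intv T x x) : a = x := by
  simp only [mem_intv_iff, SimpleGraph.dist_self] at h
  have : T.dist a x = 0 := by omega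
  exact hT.dist_eq_zero_iff.mp this

lemma mem_intv_of_geodesic {T : SimpleGraph A} (hT : T.Connected) {x y z : A}
    (p : T.Walk x y) (hp : p.length = T.dist x y) (hz : z ∈ p.support) : z ∈ intv T x y := by
  have h1 := congrArg SimpleGraph.Walk.length (p.take_spec hz)
  rw [SimpleGraph.Walk.length_append] at h1
  have h2 := SimpleGraph.dist_le (p.takeUntil z hz)
  have h3 := SimpleGraph.dist_le (p.dropUntil z hz)
  have h4 := hT.dist_triangle (u := x) (v := z) (w := y)
  simp only [mem_intv_iff]
  omega

lemma exists_next {T : SimpleGraph A} (hT : T.Connected) {x u : A} (h : x ≠ u) :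
    ∃ y, T.Adj x y ∧ T.dist x u = T.dist y u + 1 := by
  obtain ⟨p, hp⟩ := hT.exists_walk_length_eq_dist x u
  cases p with
  | nil => exact absurd rfl h
  | @cons _ y _ hadj q =>
    refine ⟨y, hadj, ?_⟩
    have h1 := SimpleGraph.dist_le q
    have h2 := hT.dist_triangle (u := x) (v := y) (w := u)
    have h3 := SimpleGraph.dist_eq_one_iff_adj.mpr hadj
    simp only [SimpleGraph.Walk.length_cons] at hp
    omega

lemma path_length_eq_dist {T : SimpleGraph A} (hT : T.IsTree) {x y : A}
    (p : T.Walk x y) (hp : p.IsPath) : p.length = T.dist x y := by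
  obtain ⟨q, hq, hl⟩ := hT.connected.exists_path_of_dist x y
  have := (hT.isAcyclic.subsingleton_path x y).elim ⟨p, hp⟩ ⟨q, hq⟩
  have h2 : p = q := congrArg Subtype.val this
  rw [h2, hl]

lemma mem_support_of_intv {T : SimpleGraph A} (hT : T.IsTree) {x y z : A}
    (p : T.Walk x y) (hp : p.IsPath) (hz : z ∈ intv T x y) : z ∈ p.support := by
  obtain ⟨q, hq⟩ := hT.connected.exists_walk_length_eq_dist x z
  obtain ⟨r, hr⟩ := hT.connected.exists_walk_length_eq_dist z y
  have hl : (q.append r).length = T.dist x y := by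
    rw [SimpleGraph.Walk.length_append, hq, hr]; exact hz
  have hpath := (q.append r).isPath_of_length_eq_dist hl
  have := (hT.isAcyclic.subsingleton_path x y).elim ⟨p, hp⟩ ⟨_, hpath⟩
  have h2 : p = q.append r := congrArg Subtype.val this
  rw [h2, SimpleGraph.Walk.mem_support_append_iff]
  exact Or.inl q.end_mem_support

lemma tree_chain {T : SimpleGraph A} (hT : T.IsTree) {x y a b : A}
    (ha : a ∈ intv T x y) (hb : b ∈ intv T x y) : a ∈ intv T x b ∨ b ∈ intv T x a := by
  obtain ⟨p, hp, hl⟩ := hT.connected.exists_path_of_dist x y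
  have ha' := mem_support_of_intv hT p hp ha
  have hb' := mem_support_of_intv hT p hp hb
  rw [← p.take_spec ha', SimpleGraph.Walk.mem_support_append_iff] at hb'
  rcases hb' with h | h
  · right
    exact mem_intv_of_geodesic hT.connected _
      (path_length_eq_dist hT _ (hp.takeUntil ha')) h
  · left
    have := mem_intv_of_geodesic hT.connected _
      (path_length_eq_dist hT _ (hp.dropUntil ha')) h
    exact (intv_trans hT.connected ha this).2

lemma tree_median_aux {T : SimpleGraph A} (hT : T.IsTree) {x y z m : A}
    (hm : m ∈ intv T y z) (hmin : ∀ t ∈ intv T y z, T.dist x m ≤ T.dist x t) :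
    m ∈ intv T x y := by
  obtain ⟨p, hp, hpl⟩ := hT.connected.exists_path_of_dist x m
  obtain ⟨q, hq, hql⟩ := hT.connected.exists_path_of_dist m y
  have hdisj : ∀ t ∈ p.support, t ∈ q.support → t = m := by
    intro t h1 h2
    have h1' := mem_intv_of_geodesic hT.connected p hpl h1
    have h2' := mem_intv_of_geodesic hT.connected q hql h2
    have h3 := (intv_trans' hT.connected hm (intv_symm h2')).1
    have h4 := hmin t h3
    simp only [mem_intv_iff] at h1'
    have : T.dist t m = 0 := by omega
    exact hT.connected.dist_eq_zero_iff.mp this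
  have hpath : (p.append q).IsPath := by
    rw [SimpleGraph.Walk.isPath_def, SimpleGraph.Walk.support_append, List.nodup_append]
    refine ⟨hp.support_nodup, hq.support_nodup.tail, ?_⟩
    intro a ha b hb hab
    subst hab
    have := hdisj a ha (List.mem_of_mem_tail hb)
    subst this
    have hn := hq.support_nodup
    rw [← SimpleGraph.Walk.cons_tail_support, List.nodup_cons] at hn
    exact hn.1 hb
  refine mem_intv_of_geodesic hT.connected _ (path_length_eq_dist hT _ hpath) ?_
  rw [SimpleGraph.Walk.mem_support_append_iff]
  exact Or.inl p.end_mem_support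

lemma tree_median {T : SimpleGraph A} (hT : T.IsTree) (x y z : A) :
    ∃ m, m ∈ intv T x y ∧ m ∈ intv T y z ∧ m ∈ intv T x z := by
  obtain ⟨m, hm, hmin⟩ := Set.exists_min_image (intv T y z) (fun t => T.dist x t)
    (Set.toFinite _) ⟨y, left_mem_intv T y z⟩
  refine ⟨m, tree_median_aux hT hm hmin, hm, ?_⟩
  exact tree_median_aux hT (intv_symm hm) (fun t ht => hmin t (intv_symm ht))

/-- The four point condition in a tree. -/
lemma tree_four {T : SimpleGraph A} (hT : T.IsTree) (x y z w : A) :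
    T.dist x y + T.dist z w ≤ T.dist x z + T.dist y w ∨
    T.dist x y + T.dist z w ≤ T.dist x w + T.dist y z := by
  obtain ⟨m, m1, m2, m3⟩ := tree_median hT x y z
  obtain ⟨k, k1, k2, k3⟩ := tree_median hT x y w
  have t1 := hT.connected.dist_triangle (u := z) (v := m) (w := w)
  have t2 := hT.connected.dist_triangle (u := m) (v := k) (w := w)
  have c1 := T.dist_comm (u := m) (v := y)
  have c2 := T.dist_comm (u := k) (v := y)
  have c3 := T.dist_comm (u := m) (v := z)
  have c4 := T.dist_comm (u := k) (v := m)
  rcases tree_chain hT m1 k1 with h | h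
  · simp only [mem_intv_iff] at *
    right; omega
  · simp only [mem_intv_iff] at *
    left; omega

/-- Hull lemma. -/
lemma tree_hull {T : SimpleGraph A} (hT : T.IsTree) {x p q m b : A}
    (h1 : m ∈ intv T x p) (h2 : m ∈ intv T x q) (hb : b ∈ intv T p q) : m ∈ intv T x b := by
  have t := hT.connected.dist_triangle (u := x) (v := m) (w := b)
  have t2 := hT.connected.dist_triangle (u := p) (v := m) (w := q)
  have t3 := hT.connected.dist_triangle (u := x) (v := b) (w := m)
  have c0 := T.dist_comm (u := b) (v := m)
  have f1 := tree_four hT m b x p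
  have f2 := tree_four hT m b x q
  have c1 := T.dist_comm (u := m) (v := x)
  have c2 := T.dist_comm (u := b) (v := x)
  have c3 := T.dist_comm (u := b) (v := p)
  have c4 := T.dist_comm (u := m) (v := p)
  simp only [mem_intv_iff] at *
  omega

lemma isProjPt_unique {T : SimpleGraph A} (hT : T.Connected) {B : Set A} {a b c : A}
    (hb : IsProjPt T B a b) (hc : IsProjPt T B a c) : b = c :=
  intv_antisymm hT (hb.2 c hc.1) (hc.2 b hb.1)

lemma projOn_eq {T : SimpleGraph A} (hT : T.Connected) {B : Set A} {a b : A}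
    (hb : IsProjPt T B a b) : projOn T B a = b := by
  have h : ∃ a', IsProjPt T B a a' := ⟨b, hb⟩
  unfold projOn
  rw [dif_pos h]
  exact isProjPt_unique hT h.choose_spec hb

lemma isProjPt_intv {T : SimpleGraph A} (hT : T.IsTree) {c p x m : A}
    (h1 : m ∈ intv T p x) (h2 : m ∈ intv T c p) (h3 : m ∈ intv T c x) :
    IsProjPt T (intv T p x) c m :=
  ⟨h1, fun _ hb => tree_hull hT h2 h3 hb⟩

/-! ### The projection rule -/

lemma gamma_hull {T : SimpleGraph A} (hT : T.IsTree) {n : ℕ} {P : Fin n → Pref A} {x m : A}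
    (h : ∀ i, m ∈ intv T x (peak (P i))) : ∀ b ∈ gammaSet T P, m ∈ intv T x b := by
  rintro b ⟨i, j, hb⟩
  exact tree_hull hT (h i) (h j) hb

lemma peak_mem_gamma (T : SimpleGraph A) {n : ℕ} (P : Fin n → Pref A) (i : Fin n) :
    peak (P i) ∈ gammaSet T P := ⟨i, i, left_mem_intv T _ _⟩

lemma gamma_proj_exists {T : SimpleGraph A} (hT : T.IsTree) {n : ℕ} (hn : 0 < n)
    (P : Fin n → Pref A) (x : A) : ∃ m, IsProjPt T (gammaSet T P) x m := by
  have : ∀ ij : Fin n × Fin n, ∃ m, m ∈ intv T x (peak (P ij.1)) ∧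
      m ∈ intv T (peak (P ij.1)) (peak (P ij.2)) ∧ m ∈ intv T x (peak (P ij.2)) :=
    fun ij => tree_median hT _ _ _
  choose md h1 h2 h3 using this
  obtain ⟨ij, -, hmin⟩ := Set.exists_min_image (Set.univ : Set (Fin n × Fin n))
    (fun ij => T.dist x (md ij)) (Set.toFinite _) ⟨(⟨0, hn⟩, ⟨0, hn⟩), trivial⟩
  refine ⟨md ij, ⟨ij.1, ij.2, h2 ij⟩, gamma_hull hT ?_⟩
  intro l
  have hm := hmin (ij.1, l) trivial
  have ha := h1 (ij.1, l)
  have hc : md ij ∈ intv T x (md (ij.1, l)) := by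
    rcases tree_chain hT (h1 ij) ha with h | h
    · exact h
    · simp only [mem_intv_iff] at h ⊢
      have e : T.dist (md (ij.1, l)) (md ij) = 0 := by
        omega
      rw [hT.connected.dist_eq_zero_iff.mp e]
      simp
  exact (intv_trans' hT.connected (h3 (ij.1, l)) hc).1

lemma projRule_spec {T : SimpleGraph A} (hT : T.IsTree) {n : ℕ} (hn : 0 < n)
    (P : Fin n → Pref A) (x : A) : IsProjPt T (gammaSet T P) x (projRule T x P) := by
  obtain ⟨m, hm⟩ := gamma_proj_exists hT hn P x
  unfold projRule
  rwa [projOn_eq hT.connected hm]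

lemma projRule_strategyProof {T : SimpleGraph A} (hT : T.IsTree) {n : ℕ} (hn : 2 ≤ n)
    (D : Set (Pref A)) (x : A) (hD : D ⊆ {P | SemiSP T x P}) :
    StrategyProof D (fun P : Fin n → Pref A => projRule T x P) := by
  intro P hP i Q hQ
  have hc := hT.connected
  have hr := projRule_spec hT (by omega) P x
  have hr' := projRule_spec hT (by omega) (Function.update P i Q) x
  show projRule T x P = projRule T x (Function.update P i Q) ∨
    prefers (P i) (projRule T x P) (projRule T x (Function.update P i Q))
  generalize projRule T x P = r at *
  generalize projRule T x (Function.update P i Q) = r' at *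
  have hSSP : SemiSP T x (P i) := hD (hP i)
  have hri := hr.2 _ (peak_mem_gamma T P i)
  have hr'j : ∀ j, j ≠ i → r' ∈ intv T x (peak (P j)) := by
    intro j hj
    have := hr'.2 _ (peak_mem_gamma T (Function.update P i Q) j)
    rwa [Function.update_of_ne hj] at this
  by_cases hrr : r = r'
  · exact Or.inl hrr
  right
  by_cases hin : r' ∈ intv T x (peak (P i))
  · have hall : ∀ j, r' ∈ intv T x (peak (P j)) := by
      intro j
      by_cases hj : j = i
      · rw [hj]; exact hin
      · exact hr'j j hj
    have h1 : r' ∈ intv T x r := gamma_hull hT hall r hr.1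
    exact hSSP.1 r r' (intv_symm hri) (intv_symm hin) hrr
      (intv_symm (intv_trans' hc hri h1).2)
  · obtain ⟨m, m1, m2, m3⟩ := tree_median hT r' (peak (P i)) x
    have hproj := isProjPt_intv hT m2 m1 m3
    have hall : ∀ j, m ∈ intv T x (peak (P j)) := by
      intro j
      by_cases hj : j = i
      · rw [hj]; exact intv_symm m2
      · exact (intv_trans' hc (hr'j j hj) (intv_symm m3)).1
    have h1 : m ∈ intv T x r := gamma_hull hT hall r hr.1
    obtain ⟨j, hj⟩ : ∃ j : Fin n, j ≠ i := by
      have : Nontrivial (Fin n) := Fin.nontrivial_iff_two_le.mpr hn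
      exact exists_ne i
    have h2 : r ∈ intv T x r' := by
      rcases tree_chain hT (hr.2 _ (peak_mem_gamma T P j)) (hr'j j hj) with h | h
      · exact h
      · exact absurd (intv_trans' hc hri h).1 hin
    have h3 : r ∈ intv T x m := tree_hull hT h2 hri m1
    have h4 : m = r := intv_antisymm hc h1 h3
    have := hSSP.2 r' (fun h => hin (intv_symm h))
    rw [projOn_eq hc hproj, h4] at this
    exact this

lemma projRule_isRule {T : SimpleGraph A} (hT : T.IsTree) {n : ℕ} (hn : 2 ≤ n)
    (D : Set (Pref A)) (x : A) : IsRule D (fun P : Fin n → Pref A => projRule T x P) := by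
  intro P hP a ha
  obtain ⟨i, j, h⟩ := (projRule_spec hT (by omega) P x).1
  rw [ha i, ha j] at h
  exact intv_self hT.connected h

lemma gammaSet_congr (T : SimpleGraph A) {n : ℕ} {P P' : Fin n → Pref A}
    (h : ∀ i, peak (P i) = peak (P' i)) : gammaSet T P = gammaSet T P' := by
  unfold gammaSet
  simp only [h]

lemma projRule_topsOnly (T : SimpleGraph A) {n : ℕ}
    (D : Set (Pref A)) (x : A) : TopsOnly D (fun P : Fin n → Pref A => projRule T x P) := by
  intro P P' _ _ h
  simp only [projRule, gammaSet_congr T h]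

lemma projRule_anonymous (T : SimpleGraph A) {n : ℕ}
    (D : Set (Pref A)) (x : A) : Anonymous D (fun P : Fin n → Pref A => projRule T x P) := by
  intro P _ σ
  have : gammaSet T (P ∘ σ) = gammaSet T P := by
    ext c
    constructor
    · rintro ⟨i, j, h⟩
      exact ⟨σ i, σ j, h⟩
    · rintro ⟨i, j, h⟩
      exact ⟨σ.symm i, σ.symm j, by simpa using h⟩
  simp only [projRule, this]

/-! ### Preferences -/

lemma card_pos_A : 0 < Fintype.card A := Fintype.card_pos

lemma prefers_trans {P : Pref A} {a b c : A} (h1 : prefers P a b) (h2 : prefers P b c) :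
    prefers P a c := lt_trans h1 h2

lemma prefers_asymm {P : Pref A} {a b : A} (h1 : prefers P a b) : ¬ prefers P b a :=
  lt_asymm h1

lemma rk_eq {P : Pref A} {k : ℕ} (h : k < Fintype.card A) : rk P k = P ⟨k, h⟩ := by
  simp [rk, h]

lemma symm_rk {P : Pref A} {k : ℕ} (h : k < Fintype.card A) : (P.symm (rk P k)).val = k := by
  rw [rk_eq h]; simp

lemma rk_symm (P : Pref A) (a : A) : rk P (P.symm a).val = a := by
  rw [rk_eq (P.symm a).isLt]; simp

lemma not_prefers_peak (P : Pref A) (a : A) : ¬ prefers P a (peak P) := by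
  intro h
  have h1 : (P.symm a).val < (P.symm (peak P)).val := h
  unfold peak at h1
  rw [symm_rk card_pos_A] at h1
  omega

/-- Weak preference. -/
def wpref (P : Pref A) (a b : A) : Prop := a = b ∨ prefers P a b

lemma wpref_trans {P : Pref A} {a b c : A} (h1 : wpref P a b) (h2 : wpref P b c) :
    wpref P a c := by
  rcases h1 with rfl | h1
  · exact h2
  · rcases h2 with rfl | h2
    · exact Or.inr h1
    · exact Or.inr (prefers_trans h1 h2)

lemma wpref_peak {P : Pref A} {a : A} (h : wpref P a (peak P)) : a = peak P := by
  rcases h with h | h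
  · exact h
  · exact absurd h (not_prefers_peak P a)

lemma swap_lemma (hcard : 3 ≤ Fintype.card A) {P P' : Pref A} {a b u v : A}
    (h1 : peak P = a) (h2 : second P = b) (h3 : peak P' = b) (h4 : second P' = a)
    (h5 : ∀ k : ℕ, 2 ≤ k → rk P k = rk P' k) (hu : wpref P u v) (hv : wpref P' v u) :
    u = v ∨ (u = a ∧ v = b) := by
  rcases hu with hu | hu
  · exact Or.inl hu
  rcases hv with hv | hv
  · exact Or.inl hv.symm
  right
  have hu' : (P.symm u).val < (P.symm v).val := hu
  have hv' : (P'.symm v).val < (P'.symm u).val := hv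
  have key : ∀ w, 2 ≤ (P.symm w).val → (P'.symm w).val = (P.symm w).val := by
    intro w hw
    have e := h5 _ hw
    rw [rk_symm] at e
    have := symm_rk (P := P') (P.symm w).isLt
    rwa [← e] at this
  have ka : (P'.symm a).val = 1 := by rw [← h4]; exact symm_rk (by omega)
  have kb : (P'.symm b).val = 0 := by rw [← h3]; exact symm_rk (by omega)
  have ru := rk_symm P u
  have rv := rk_symm P' v
  by_cases c2 : 2 ≤ (P.symm u).val
  · have e1 := key u c2
    have e2 := key v (by omega)
    omega
  by_cases c1 : (P.symm u).val = 1
  · rw [c1] at ru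
    have : u = b := by rw [← ru, ← h2]; rfl
    rw [this] at hv'
    omega
  · have c0 : (P.symm u).val = 0 := by omega
    rw [c0] at ru
    have hua : u = a := by rw [← ru, ← h1]; rfl
    refine ⟨hua, ?_⟩
    rw [hua, ka] at hv'
    have : (P'.symm v).val = 0 := by omega
    rw [this] at rv
    rw [← rv, ← h3]; rfl

/-! ### Rules as functions of the peaks -/

/-- Properties of an anonymous rule, written as a function of the peaks. -/
structure TopRule (D : Set (Pref A)) {n : ℕ} (F : (Fin n → A) → A) : Prop where
  sp : ∀ P ∈ D, ∀ v v' : Fin n → A, (∀ i, v' i = v i ∨ v i = peak P) → wpref P (F v) (F v')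
  una : ∀ a, F (fun _ => a) = a
  anon : ∀ v, ∀ σ : Equiv.Perm (Fin n), F (v ∘ σ) = F v
  rich : ∀ a, ∃ P ∈ D, peak P = a

lemma minimallyRich_of_connected {D : Set (Pref A)} (hcard : 3 ≤ Fintype.card A)
    (hc : (adjGraph D).Connected) (a : A) : ∃ P ∈ D, peak P = a := by
  have : Nontrivial A := Fintype.one_lt_card_iff_nontrivial.mp (by omega)
  obtain ⟨b, hb⟩ := exists_ne a
  obtain ⟨y, hy, -⟩ := exists_next hc hb.symm
  rw [adjGraph, SimpleGraph.fromRel_adj] at hy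
  rcases hy.2 with ⟨P, hP, P', hP', h1, h2, h3, h4, h5⟩ | ⟨P, hP, P', hP', h1, h2, h3, h4, h5⟩
  · exact ⟨P, hP, h1⟩
  · exact ⟨P', hP', h3⟩

lemma topRule_of_rule {D : Set (Pref A)} (hcard : 3 ≤ Fintype.card A)
    (hc : (adjGraph D).Connected) {n : ℕ} {f : (Fin n → Pref A) → A}
    (hU : IsRule D f) (hT : TopsOnly D f) (hS : StrategyProof D f) (hA : Anonymous D f) :
    ∃ F : (Fin n → A) → A, TopRule D F := by
  choose sel hsel hpk using minimallyRich_of_connected hcard hc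
  refine ⟨fun v => f (fun i => sel (v i)), ?_, ?_, ?_, ?_⟩
  · intro P hP v v' hv
    have step : ∀ (w : Fin n → A) (i : Fin n) (q : A), w i = peak P →
        wpref P (f (fun j => sel (w j))) (f (fun j => sel (Function.update w i q j))) := by
      intro w i q hw
      have hin : InDom D (Function.update (fun j => sel (w j)) i P) := by
        intro j
        by_cases h : j = i
        · subst h; simpa using hP
        · simpa [Function.update_of_ne h] using hsel _
      have e1 : f (fun j => sel (w j)) = f (Function.update (fun j => sel (w j)) i P) := by
        refine hT _ _ (fun j => hsel _) hin ?_
        intro j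
        by_cases h : j = i
        · subst h; simp [hpk, hw]
        · simp [Function.update_of_ne h]
      have e2 : (fun j => sel (Function.update w i q j)) =
          Function.update (Function.update (fun j => sel (w j)) i P) i (sel q) := by
        funext j
        by_cases h : j = i
        · subst h; simp
        · simp [Function.update_of_ne h]
      have := hS _ hin i (sel q) (hsel q)
      rw [Function.update_self] at this
      rw [e1, e2]
      exact this
    have main : ∀ S : Finset (Fin n),
        wpref P (f (fun j => sel (v j))) (f (fun j => sel (S.piecewise v' v j))) := by
      intro S
      induction S using Finset.induction_on with
      | empty => left; simp
      | insert i S hi ih =>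
        refine wpref_trans ih ?_
        rw [Finset.piecewise_insert]
        have hwi : S.piecewise v' v i = v i := Finset.piecewise_eq_of_notMem _ _ _ hi
        rcases hv i with h | h
        · left
          have : Function.update (S.piecewise v' v) i (v' i) = S.piecewise v' v := by
            rw [h, ← hwi, Function.update_eq_self]
          rw [this]
        · exact step _ i _ (hwi.trans h)
    have := main Finset.univ
    simpa using this
  · intro a
    exact hU _ (fun _ => hsel _) a (fun _ => hpk a)
  · intro v σ
    exact hA (fun i => sel (v i)) (fun _ => hsel _) σ
  · exact fun a => ⟨sel a, hsel a, hpk a⟩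

/-- One-variable behaviour along edges. -/
def EdgeFn (G : SimpleGraph A) (φ : A → A) : Prop :=
  ∀ x y, G.Adj x y → φ x = φ y ∨ (φ x = x ∧ φ y = y)

namespace TopRule

variable {D : Set (Pref A)} {n : ℕ} {F : (Fin n → A) → A}

lemma top (h : TopRule D F) {v v' : Fin n → A} {a : A} (hv : F v = a)
    (hvv : ∀ i, v' i = v i ∨ v' i = a) : F v' = a := by
  obtain ⟨P, hP, hp⟩ := h.rich a
  have := h.sp P hP v' v (fun i => by
    rcases hvv i with h | h
    · exact Or.inl h.symm
    · exact Or.inr (h.trans hp.symm))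
  rw [hv, ← hp] at this
  rw [wpref_peak this, hp]

lemma edge (h : TopRule D F) (hcard : 3 ≤ Fintype.card A) {v v' : Fin n → A} {x y : A}
    (hxy : (adjGraph D).Adj x y) (hv : ∀ i, v' i = v i ∨ (v i = x ∧ v' i = y)) :
    F v = F v' ∨ (F v = x ∧ F v' = y) := by
  rw [adjGraph, SimpleGraph.fromRel_adj] at hxy
  obtain ⟨P, hP, P', hP', h1, h2, h3, h4, h5⟩ : DomAdjacent D x y := by
    rcases hxy.2 with h | ⟨P, hP, P', hP', h1, h2, h3, h4, h5⟩
    · exact h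
    · exact ⟨P', hP', P, hP, h3, h4, h1, h2, fun k hk => (h5 k hk).symm⟩
  refine swap_lemma hcard h1 h2 h3 h4 h5 (h.sp P hP v v' ?_) (h.sp P' hP' v' v ?_)
  · intro i
    rcases hv i with h | h
    · exact Or.inl h
    · exact Or.inr (h.1.trans h1.symm)
  · intro i
    rcases hv i with h | h
    · exact Or.inl h.symm
    · exact Or.inr (h.2.trans h3.symm)

lemma edgeFn (h : TopRule D F) (hcard : 3 ≤ Fintype.card A) (V : A → Fin n → A)
    (hV : ∀ i, (∀ a b, V a i = V b i) ∨ (∀ a, V a i = a)) :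
    EdgeFn (adjGraph D) (fun a => F (V a)) := by
  intro x y hxy
  refine h.edge hcard hxy (fun i => ?_)
  rcases hV i with h | h
  · exact Or.inl (h _ _)
  · exact Or.inr ⟨h _, h _⟩

end TopRule

lemma EdgeFn.walk {G : SimpleGraph A} {φ : A → A} (h : EdgeFn G φ) {u v : A}
    (p : G.Walk u v) (hp : φ u ∉ p.support) : φ v = φ u := by
  induction p with
  | nil => rfl
  | cons hadj q ih =>
    rw [SimpleGraph.Walk.support_cons, List.mem_cons, not_or] at hp
    rcases h _ _ hadj with e | e
    · rw [e] at hp ⊢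
      exact ih hp.2
    · exact absurd e.1 hp.1

lemma EdgeFn.walk_mem {G : SimpleGraph A} {φ : A → A} (h : EdgeFn G φ) {u v : A}
    (p : G.Walk u v) (hne : φ u ≠ φ v) : φ u ∈ p.support := by
  by_contra hc
  exact hne (h.walk p hc).symm

lemma EdgeFn.path_fix {G : SimpleGraph A} {φ : A → A} (h : EdgeFn G φ) {u v w : A}
    (p : G.Walk u v) (hp : p.IsPath) (hu : φ u = u) (hv : φ v = v) (hw : w ∈ p.support) :
    φ w = w := by
  have h1 : φ w ∈ (p.takeUntil w hw).support := by
    by_contra hc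
    have := h.walk (p.takeUntil w hw).reverse (by simpa using hc)
    rw [hu] at this
    rw [← this] at hc
    exact hc (SimpleGraph.Walk.start_mem_support _)
  have h2 : φ w ∈ (p.dropUntil w hw).support := by
    by_contra hc
    have := h.walk (p.dropUntil w hw) hc
    rw [hv] at this
    rw [← this] at hc
    exact hc (SimpleGraph.Walk.end_mem_support _)
  by_contra hne
  rw [← p.take_spec hw] at hp
  exact hp.disjoint_support_of_append (by
    intro hnil
    have := SimpleGraph.Walk.nil_iff_support_eq.mp hnil
    rw [this] at h2
    simp at h2
    exact hne h2) h1 (by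
    rw [← SimpleGraph.Walk.cons_tail_support, List.mem_cons] at h2
    rcases h2 with h2 | h2
    · exact absurd h2 hne
    · have e : (p.dropUntil w hw).tail.support = (p.dropUntil w hw).support.tail := by
        apply SimpleGraph.Walk.support_tail_of_not_nil
        intro hnil
        have := SimpleGraph.Walk.nil_iff_support_eq.mp hnil
        rw [this] at h2
        simp at h2
      rw [e]; exact h2)

lemma EdgeFn.intv_mem {G : SimpleGraph A} (hG : G.Connected) {φ : A → A} (h : EdgeFn G φ)
    {u v : A} (hne : φ u ≠ φ v) : φ u ∈ intv G u v := by
  obtain ⟨p, hp⟩ := hG.exists_walk_length_eq_dist u v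
  exact mem_intv_of_geodesic hG p hp (h.walk_mem p hne)

lemma EdgeFn.intv_fix {G : SimpleGraph A} (hG : G.Connected) {φ : A → A} (h : EdgeFn G φ)
    {u v w : A} (hu : φ u = u) (hv : φ v = v) (hw : w ∈ intv G u v) : φ w = w := by
  have h1 : φ w ∈ intv G w u := by
    by_cases hc : φ w = φ u
    · rw [hc, hu]; exact right_mem_intv _ _ _
    · exact h.intv_mem hG hc
  have h2 : φ w ∈ intv G w v := by
    by_cases hc : φ w = φ v
    · rw [hc, hv]; exact right_mem_intv _ _ _
    · exact h.intv_mem hG hc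
  have h3 := (intv_trans hG hw h2).2
  have h4 := intv_antisymm hG h3 (intv_symm h1)
  exact h4.symm

/-! ### The adjacency graph has no cycles -/

/-- The edge `x y` together with a path from `x` to `y` forms a cycle with vertex set `C`. -/
def Cyc (G : SimpleGraph A) (x y : A) (C : Set A) : Prop :=
  G.Adj x y ∧ ∃ q : G.Walk x y, q.IsPath ∧ 2 ≤ q.length ∧ ∀ u, u ∈ q.support ↔ u ∈ C

lemma Cyc.symm {G : SimpleGraph A} {x y : A} {C : Set A} (h : Cyc G x y C) : Cyc G y x C := by
  obtain ⟨hadj, q, hq, hl, hC⟩ := h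
  exact ⟨hadj.symm, q.reverse, hq.reverse, by simpa using hl, by simpa using hC⟩

lemma Cyc.left_mem {G : SimpleGraph A} {x y : A} {C : Set A} (h : Cyc G x y C) : x ∈ C := by
  obtain ⟨hadj, q, hq, hl, hC⟩ := h
  exact (hC x).1 q.start_mem_support

lemma Cyc.next {G : SimpleGraph A} {x y : A} {C : Set A} (h : Cyc G x y C) :
    ∃ z, z ≠ x ∧ z ≠ y ∧ Cyc G y z C := by
  obtain ⟨hadj, q, hq, hl, hC⟩ := h.symm
  cases q with
  | nil => simp at hl
  | @cons _ z _ hyz r =>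
    rw [SimpleGraph.Walk.cons_isPath_iff] at hq
    simp only [SimpleGraph.Walk.length_cons] at hl
    refine ⟨z, ?_, hyz.ne', hyz, SimpleGraph.Walk.cons hadj r.reverse, ?_, ?_, ?_⟩
    · rintro rfl
      cases r with
      | nil => simp at hl
      | cons h' r' =>
        have h2 := hq.1
        rw [SimpleGraph.Walk.cons_isPath_iff] at h2
        exact h2.2 r'.end_mem_support
    · rw [SimpleGraph.Walk.cons_isPath_iff]
      exact ⟨hq.1.reverse, by simpa using hq.2⟩
    · simp only [SimpleGraph.Walk.length_cons, SimpleGraph.Walk.length_reverse]; exact hl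
    · intro u
      rw [← hC u]
      simp

lemma cyc_edge {G : SimpleGraph A} {g : A → A → A} (h1 : ∀ b, EdgeFn G (fun a => g a b))
    (h2 : ∀ a, EdgeFn G (fun b => g a b)) (hu : ∀ a, g a a = a) {x y : A} {C : Set A}
    (hC : Cyc G x y C) (hx : g x y = x) :
    (∀ u ∈ C, g u y = u) ∧ (∀ u ∈ C, g x u = x) := by
  obtain ⟨hadj, q, hq, hl, hC⟩ := hC
  constructor
  · intro u hu'
    exact (h1 y).path_fix q hq hx (hu y) ((hC u).2 hu')
  · intro u hu'
    by_cases hux : u = x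
    · rw [hux]; exact hu x
    have hmem := (hC u).2 hu'
    have hnot : x ∉ (q.dropUntil u hmem).support := by
      intro hx'
      have hq' := hq
      rw [← q.take_spec hmem] at hq'
      exact hq'.ne_of_mem_support_of_append (x := x) (y := x) (fun h => hux h.symm)
        (SimpleGraph.Walk.start_mem_support _) hx' rfl
    have := (h2 x).walk (q.dropUntil u hmem).reverse (by simpa [hx] using hnot)
    simpa [hx] using this

lemma cyc_no {G : SimpleGraph A} {g : A → A → A} (h1 : ∀ b, EdgeFn G (fun a => g a b))
    (h2 : ∀ a, EdgeFn G (fun b => g a b)) (hu : ∀ a, g a a = a) {x y : A} {C : Set A}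
    (hC : Cyc G x y C) (hx : g x y = x) (hy : g y x = x) : False := by
  obtain ⟨z, hzy, hzx, hz⟩ := hC.symm.next
  have a1 := (cyc_edge h1 h2 hu hC hx).2 z hz.symm.left_mem
  have a2 := (cyc_edge h1 h2 hu hz a1).1 y hC.symm.left_mem
  have a3 := (cyc_edge (g := fun a b => g b a) h2 h1 hu hC hy).1 z hz.symm.left_mem
  exact hzy (a3.symm.trans a2)

namespace TopRule

variable {D : Set (Pref A)} {n : ℕ} {F : (Fin n → A) → A}

lemma no_cyc (h : TopRule D F) (hcard : 3 ≤ Fintype.card A) (hn : 2 ≤ n) {x y : A} {C : Set A}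
    (hC : Cyc (adjGraph D) x y C) : False := by
  obtain ⟨k, hk⟩ : ∃ k, k = n / 2 := ⟨_, rfl⟩
  obtain ⟨g, hg⟩ : ∃ g : A → A → A, ∀ a b, g a b = F (fun i => if i.val < k then a else b) :=
    ⟨_, fun _ _ => rfl⟩
  have h1 : ∀ b, EdgeFn (adjGraph D) (fun a => g a b) := by
    intro b
    simp only [hg]
    refine h.edgeFn hcard (fun a i => if i.val < k then a else b) (fun i => ?_)
    by_cases hi : i.val < k <;> simp [hi]
  have h2 : ∀ a, EdgeFn (adjGraph D) (fun b => g a b) := by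
    intro a
    simp only [hg]
    refine h.edgeFn hcard (fun b i => if i.val < k then a else b) (fun i => ?_)
    by_cases hi : i.val < k <;> simp [hi]
  have hu : ∀ a, g a a = a := by
    intro a
    rw [hg]
    simpa using h.una a
  have hrev : ∀ a b, g a b = F (fun i => if n - 1 - i.val < k then a else b) := by
    intro a b
    rw [hg, ← h.anon _ Fin.revPerm]
    congr 1
    funext i
    have : (Fin.rev i).val = n - 1 - i.val := by rw [Fin.val_rev]; omega
    simp only [Function.comp, Fin.revPerm_apply, this]
  have hmono : ∀ a b, g a b = a → g b a = a := by
    intro a b hab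
    rw [hrev] at hab
    rw [hg]
    refine h.top hab (fun i => ?_)
    by_cases hi : i.val < k
    · left
      have : ¬ (n - 1 - i.val < k) := by omega
      simp [hi, this]
    · right; simp [hi]
  have hmaj : ∀ x y, Cyc (adjGraph D) x y C → g x y = y := by
    intro x y hxy
    rcases h1 y x y hxy.1 with e | e
    · simp only [hu] at e; exact e
    · exact absurd (cyc_no h1 h2 hu hxy e.1 (hmono _ _ e.1)) id
  have gxy := hmaj x y hC
  have gyx := hmaj y x hC.symm
  by_cases hpar : n = 2 * k
  · -- even number of voters
    have : g x y = g y x := by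
      rw [hrev x y, hg y x]
      congr 1
      funext i
      by_cases hi : i.val < k
      · have : ¬ (n - 1 - i.val < k) := by omega
        simp [hi, this]
      · have : n - 1 - i.val < k := by have := i.isLt; omega
        simp [hi, this]
    rw [gxy, gyx] at this
    exact hC.1.ne this.symm
  have hodd : n = 2 * k + 1 := by omega
  have hk1 : 1 ≤ k := by omega
  obtain ⟨z, hzx, hzy, hz⟩ := hC.next
  have hzC : z ∈ C := hz.symm.left_mem
  -- middle voter functions
  obtain ⟨th, hth⟩ : ∃ th : A → A → A → A, ∀ a c b,
      th a c b = F (fun i => if i.val < k then a else if i.val = k then c else b) :=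
    ⟨_, fun _ _ _ => rfl⟩
  have thE : ∀ a b, EdgeFn (adjGraph D) (fun c => th a c b) := by
    intro a b
    simp only [hth]
    refine h.edgeFn hcard
      (fun c i => if i.val < k then a else if i.val = k then c else b) (fun i => ?_)
    by_cases hi : i.val < k <;> by_cases hi' : i.val = k <;> simp [hi, hi']
  have th1 : ∀ a b, th a b b = g a b := by
    intro a b
    rw [hth, hg]
    simp
  have th2 : ∀ a b, th a a b = g b a := by
    intro a b
    rw [hth, hrev]
    congr 1
    funext i
    have := i.isLt
    by_cases hi : i.val < k
    · have h' : ¬ (n - 1 - i.val < k) := by omega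
      simp [hi, h']
    · by_cases hi' : i.val = k
      · have h' : ¬ (n - 1 - i.val < k) := by omega
        simp [hi', h']
        omega
      · have h' : n - 1 - i.val < k := by omega
        simp [hi, hi', h']
  -- `z` is chosen at `x^k z y^k`
  have e1 : th x z y = z := by
    obtain ⟨hadj, q, hq, hl, hCq⟩ := hC
    exact (thE x y).path_fix q hq (by simp only [th2]; exact gyx)
      (by simp only [th1]; exact gxy) ((hCq z).2 hzC)
  -- `y` is chosen at `x^k y z^k`
  have gxz : g x z = z :=
    (cyc_edge (g := fun a b => g b a) h2 h1 hu hC.symm gxy).1 z hzC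
  have gzx : g z x = x :=
    (cyc_edge (g := fun a b => g b a) h2 h1 hu hC gyx).2 z hzC
  have e2 : th x y z = y := by
    refine (thE x z).path_fix (SimpleGraph.Walk.cons hC.1 (SimpleGraph.Walk.cons hz.1 .nil))
      ?_ (by simp only [th2]; exact gzx) (by simp only [th1]; exact gxz) ?_
    · simp [SimpleGraph.Walk.cons_isPath_iff, hC.1.ne, hz.1.ne, Ne.symm hzx]
    · simp
  -- contradiction
  have e3 : F (fun i => if i.val < k then x else if i.val = 2 * k then y else z) = z := by
    rw [hth] at e1
    refine h.top e1 (fun i => ?_)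
    have := i.isLt
    by_cases hi : i.val < k
    · simp [hi]
    · by_cases hi' : i.val = 2 * k
      · left
        have : ¬ (2 * k = k) := by omega
        simp [hi', this]
      · right; simp [hi, hi']
  have e4 : th x y z = z := by
    rw [← h.anon _ (Equiv.swap (⟨k, by omega⟩ : Fin n) ⟨2 * k, by omega⟩)] at e3
    rw [hth]
    refine Eq.trans (congrArg F ?_) e3
    funext i
    simp only [Function.comp]
    by_cases hi1 : i = ⟨k, by omega⟩
    · subst hi1
      rw [Equiv.swap_apply_left]
      have a1 : ¬ (2 * k < k) := by omega
      have a2 : ¬ (2 * k = k) := by omega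
      have a3 : ¬ (k = 2 * k) := by omega
      simp [a1, a2, a3]
    · by_cases hi2 : i = ⟨2 * k, by omega⟩
      · subst hi2
        rw [Equiv.swap_apply_right]
        have a1 : ¬ (2 * k < k) := by omega
        have a2 : ¬ (2 * k = k) := by omega
        have a3 : ¬ (k = 2 * k) := by omega
        simp only [a1, a2, a3, lt_irrefl, if_false]
      · rw [Equiv.swap_apply_of_ne_of_ne hi1 hi2]
        have b1 : ¬ (i.val = k) := fun hh => hi1 (Fin.ext hh)
        have b2 : ¬ (i.val = 2 * k) := fun hh => hi2 (Fin.ext hh)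
        simp [b1, b2]
  exact hzy (e4.symm.trans e2)

lemma isTree (h : TopRule D F) (hcard : 3 ≤ Fintype.card A) (hn : 2 ≤ n)
    (hc : (adjGraph D).Connected) : (adjGraph D).IsTree := by
  refine ⟨hc, ?_⟩
  intro v c hcyc
  cases c with
  | nil => simp at hcyc
  | cons hadj q =>
    have hl := hcyc.three_le_length
    rw [SimpleGraph.Walk.cons_isCycle_iff] at hcyc
    simp only [SimpleGraph.Walk.length_cons] at hl
    exact h.no_cyc hcard hn (C := {u | u ∈ q.support})
      ⟨hadj.symm, q, hcyc.1, by omega, fun u => Iff.rfl⟩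

/-! ### Semi-single-peakedness -/

lemma edgeFn_rest (h : TopRule D F) (hcard : 3 ≤ Fintype.card A) (i0 : Fin n) (p : A) :
    EdgeFn (adjGraph D) (fun z => F (fun i => if i = i0 then p else z)) := by
  refine h.edgeFn hcard (fun z i => if i = i0 then p else z) (fun i => ?_)
  by_cases hi : i = i0 <;> simp [hi]

lemma edgeFn_one (h : TopRule D F) (hcard : 3 ≤ Fintype.card A) (i0 : Fin n)
    (v : Fin n → A) :
    EdgeFn (adjGraph D) (fun z => F (fun i => if i = i0 then z else v i)) := by
  refine h.edgeFn hcard (fun z i => if i = i0 then z else v i) (fun i => ?_)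
  by_cases hi : i = i0 <;> simp [hi]

lemma exists_sink (h : TopRule D F) (hcard : 3 ≤ Fintype.card A) (hn : 2 ≤ n)
    (hc : (adjGraph D).Connected) :
    ∃ x, ∀ a, F (fun i => if i = ⟨0, by omega⟩ then a else x) = x := by
  obtain ⟨g, hg⟩ : ∃ g : A → A → A,
      ∀ a b, g a b = F (fun i => if i = ⟨0, by omega⟩ then a else b) := ⟨_, fun _ _ => rfl⟩
  have h1 : ∀ b, EdgeFn (adjGraph D) (fun a => g a b) := by
    intro b
    simp only [hg]
    exact h.edgeFn_one hcard _ (fun _ => b)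
  have hu : ∀ a, g a a = a := by
    intro a
    rw [hg]
    simpa using h.una a
  have hmono : ∀ a b, g a b = a → g b a = a := by
    intro a b hab
    rw [hg, ← h.anon _ (Equiv.swap (⟨0, by omega⟩ : Fin n) ⟨1, by omega⟩)] at hab
    rw [hg]
    refine h.top hab (fun i => ?_)
    by_cases hi : i = ⟨0, by omega⟩
    · left
      subst hi
      simp
    · right; simp [hi]
  obtain ⟨x, -, hmax⟩ := Set.exists_max_image (Set.univ : Set A)
    (fun x => Set.ncard {u | g u x = x}) (Set.toFinite _) Set.univ_nonempty
  refine ⟨x, fun a => ?_⟩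
  rw [← hg]
  by_contra hne
  have hax : x ≠ a := by
    rintro rfl
    exact hne (hu _)
  obtain ⟨y, hxy, hd⟩ := exists_next hc hax
  have hyx : g y x = y := by
    rcases h1 x x y hxy with e | e
    · exfalso
      simp only [hu] at e
      have : (fun z => g z x) y ≠ (fun z => g z x) a := by
        simp only [← e]
        exact fun hh => hne hh.symm
      have hm := (h1 x).intv_mem hc this
      simp only [← e, mem_intv_iff] at hm
      omega
    · exact e.2
  have hxy' : g x y = y := hmono _ _ hyx
  have hsub : {u | g u x = x} ⊂ {u | g u y = y} := by
    rw [Set.ssubset_iff_of_subset]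
    · exact ⟨y, hu y, by simp [hyx, hxy.ne']⟩
    · intro u hux
      simp only [Set.mem_ofPred_eq] at hux ⊢
      by_contra huy
      have m1 : y ∈ intv (adjGraph D) x u := by
        have := (h1 y).intv_mem hc (u := x) (v := u) (by
          simp only [hxy']; exact fun hh => huy hh.symm)
        simpa only [hxy'] using this
      have m2 : x ∈ intv (adjGraph D) u y := by
        have := (h1 x).intv_mem hc (u := u) (v := y) (by
          simp only [hux, hyx]; exact hxy.ne)
        simpa only [hux] using this
      exact hxy.ne (intv_antisymm hc m2 (intv_symm m1))
  have := Set.ncard_lt_ncard hsub (Set.toFinite _)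
  have := hmax y trivial
  omega

/-- Consecutive alternatives on the way to a point `w` that the others can enforce. -/
lemma prefers_edge (h : TopRule D F) (hcard : 3 ≤ Fintype.card A) (hn : 2 ≤ n)
    (hc : (adjGraph D).Connected) {P : Pref A} (hP : P ∈ D) {w c d : A}
    (hw : F (fun i => if i = ⟨0, by omega⟩ then peak P else w) = w)
    (hcd : (adjGraph D).Adj c d) (hd : d ∈ intv (adjGraph D) (peak P) w)
    (hcp : c ∈ intv (adjGraph D) (peak P) d) : prefers P c d := by
  have hchi := h.edgeFn_rest hcard (⟨0, by omega⟩ : Fin n) (peak P)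
  have hp0 : F (fun i => if i = (⟨0, by omega⟩ : Fin n) then peak P else peak P) = peak P := by
    simpa using h.una (peak P)
  have chd := hchi.intv_fix hc hp0 hw hd
  have chc := hchi.intv_fix hc hp0 hw (intv_trans' hc hd hcp).1
  obtain ⟨V, hV⟩ : ∃ V : ℕ → A → Fin n → A, ∀ j z i,
      V j z i = if i = ⟨0, by omega⟩ then z else if i.val ≤ j then c else d :=
    ⟨_, fun _ _ _ => rfl⟩
  have hdc : d ∉ intv (adjGraph D) (peak P) c := by
    intro hh
    exact hcd.ne (intv_antisymm hc hcp hh)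
  -- values of `τ`
  have tau0 : F (V 0 (peak P)) = d := by
    rw [← chd]
    congr 1
    funext i
    rw [hV]
    by_cases hi : i = ⟨0, by omega⟩
    · simp [hi]
    · have : ¬ (i.val ≤ 0) := fun hh => hi (Fin.ext (by simpa using hh))
      rw [if_neg hi, if_neg hi, if_neg this]
  have taun : F (V n (peak P)) = c := by
    conv_rhs => rw [← chc]
    congr 1
    funext i
    rw [hV]
    have : i.val ≤ n := by have := i.isLt; omega
    simp [this]
  have hex : ∃ j, F (V j (peak P)) = c := ⟨n, taun⟩
  obtain ⟨hj, hjmin⟩ := And.intro (Nat.find_spec hex) (fun m => Nat.find_min hex (m := m))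
  generalize Nat.find hex = j at hj hjmin
  have hj0 : j ≠ 0 := by
    rintro rfl
    exact hcd.ne (hj.symm.trans tau0)
  have hjn : j < n := by
    by_contra hcon
    have hprev := hjmin (n - 1) (by omega)
    apply hprev
    rw [← taun]
    congr 1
    funext i
    have h1 : i.val ≤ n := by have := i.isLt; omega
    have h2 : i.val ≤ n - 1 := by have := i.isLt; omega
    rw [hV, hV]
    simp [h1, h2]
  -- edge comparison
  have hsig : F (V j d) = d := by
    by_contra hne
    have hsc : F (V j d) = c := by
      have := h.edge hcard (v := V j d) (v' := fun _ => d) hcd (fun i => by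
        rw [hV]
        by_cases hi : i = ⟨0, by omega⟩
        · simp [hi]
        · by_cases hi' : i.val ≤ j <;> simp [hi, hi'])
      rw [h.una] at this
      rcases this with e | e
      · exact absurd e hne
      · exact e.1
    -- swap
    have hswap : F (V (j - 1) c) = c := by
      rw [← h.anon _ (Equiv.swap (⟨0, by omega⟩ : Fin n) ⟨j, hjn⟩)] at hsc
      conv_rhs => rw [← hsc]
      congr 1
      funext i
      simp only [Function.comp]
      by_cases hi : i = ⟨0, by omega⟩
      · subst hi
        rw [Equiv.swap_apply_left, hV, hV]
        simp [hj0]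
      · by_cases hi2 : i = ⟨j, hjn⟩
        · subst hi2
          rw [Equiv.swap_apply_right, hV, hV]
          have : ¬ (j ≤ j - 1) := by omega
          rw [if_neg hi]
          simp [this]
        · rw [Equiv.swap_apply_of_ne_of_ne hi hi2, hV, hV, if_neg hi, if_neg hi]
          have b2 : ¬ (i.val = j) := fun hh => hi2 (Fin.ext hh)
          by_cases hle : i.val ≤ j
          · rw [if_pos hle, if_pos (by omega)]
          · rw [if_neg hle, if_neg (by omega)]
    have hneq := hjmin (j - 1) (by omega)
    -- the value at `V (j-1) (peak P)` is `d`
    have hval : F (V (j - 1) (peak P)) = d := by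
      have := h.edge hcard (v := V (j - 1) (peak P))
        (v' := fun i => if i = (⟨0, by omega⟩ : Fin n) then peak P else c) hcd.symm (fun i => by
        rw [hV]
        by_cases hi : i = ⟨0, by omega⟩
        · simp [hi]
        · by_cases hi' : i.val ≤ j - 1 <;> simp [hi, hi'])
      rw [chc] at this
      rcases this with e | e
      · exact absurd e hneq
      · exact e.1
    have hrho := h.edgeFn_one hcard (⟨0, by omega⟩ : Fin n)
      (fun i => if i.val ≤ j - 1 then c else d)
    have eV : ∀ z, F (V (j - 1) z) = F (fun i => if i = (⟨0, by omega⟩ : Fin n) then z else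
        (fun i : Fin n => if i.val ≤ j - 1 then c else d) i) := by
      intro z
      congr 1
      funext i
      rw [hV]
    simp only [← eV] at hrho
    have hm := hrho.intv_mem hc (u := peak P) (v := c) (by
      simp only [hval, hswap]; exact hcd.ne')
    simp only [hval] at hm
    exact hdc hm
  have := h.sp P hP (V j (peak P)) (V j d) (fun i => by
    rw [hV, hV]
    by_cases hi : i = ⟨0, by omega⟩ <;> simp [hi])
  rw [hj, hsig] at this
  rcases this with e | e
  · exact absurd e hcd.ne
  · exact e

lemma prefers_chain (h : TopRule D F) (hcard : 3 ≤ Fintype.card A) (hn : 2 ≤ n)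
    (hc : (adjGraph D).Connected) {P : Pref A} (hP : P ∈ D) {w : A}
    (hw : F (fun i => if i = ⟨0, by omega⟩ then peak P else w) = w) (m : ℕ) :
    ∀ c d : A, (adjGraph D).dist c d = m → d ∈ intv (adjGraph D) (peak P) w →
    c ∈ intv (adjGraph D) (peak P) d → wpref P c d := by
  induction m with
  | zero =>
    intro c d hm _ _
    exact Or.inl (hc.dist_eq_zero_iff.mp hm)
  | succ m ih =>
    intro c d hm hd hcp
    have hne : c ≠ d := by
      rintro rfl
      simp at hm
    obtain ⟨e, hce, hde⟩ := exists_next hc hne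
    have he1 : e ∈ intv (adjGraph D) c d := by
      rw [mem_intv_iff, SimpleGraph.dist_eq_one_iff_adj.mpr hce]
      omega
    have he2 := intv_trans hc hcp he1
    have he3 := (intv_trans' hc hd he2.1).1
    exact wpref_trans (Or.inr (h.prefers_edge hcard hn hc hP hw hce he3 he2.2))
      (ih e d (by omega) hd he2.1)

lemma semiSP (h : TopRule D F) (hcard : 3 ≤ Fintype.card A) (hn : 2 ≤ n)
    (hc : (adjGraph D).Connected) : ∃ x, ∀ P ∈ D, SemiSP (adjGraph D) x P := by
  have hT := h.isTree hcard hn hc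
  obtain ⟨x, hx⟩ := h.exists_sink hcard hn hc
  refine ⟨x, fun P hP => ⟨?_, ?_⟩⟩
  · intro c d _ hd hne hcp
    rcases h.prefers_chain hcard hn hc hP (hx (peak P)) _ c d rfl hd hcp with e | e
    · exact absurd e hne
    · exact e
  · intro c hnot
    obtain ⟨m, m1, m2, m3⟩ := tree_median hT c (peak P) x
    rw [projOn_eq hc (isProjPt_intv hT m2 m1 m3)]
    have hmc : m ≠ c := by
      rintro rfl
      exact hnot m2
    have hchi := h.edgeFn_rest hcard (⟨0, by omega⟩ : Fin n) (peak P)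
    have hp0 : F (fun i => if i = (⟨0, by omega⟩ : Fin n) then peak P else peak P) = peak P := by
      simpa using h.una (peak P)
    have chm := hchi.intv_fix hc hp0 (hx (peak P)) m2
    obtain ⟨w, hw⟩ : ∃ w, w = F (fun i => if i = ⟨0, by omega⟩ then peak P else c) := ⟨_, rfl⟩
    have hww : F (fun i => if i = ⟨0, by omega⟩ then peak P else w) = w := by
      refine h.top hw.symm (fun i => ?_)
      by_cases hi : i = ⟨0, by omega⟩ <;> simp [hi]
    have hwm : w ∈ intv (adjGraph D) m c := by
      by_cases hwm : w = m
      · rw [hwm]; exact left_mem_intv _ _ _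
      · have := hchi.intv_mem hc (u := c) (v := m) (by
          simp only [chm, ← hw]; exact hwm)
        simp only [← hw] at this
        exact intv_symm this
    have hwc : wpref P w c := by
      have := h.sp P hP (fun i => if i = ⟨0, by omega⟩ then peak P else c) (fun _ => c)
        (fun i => by by_cases hi : i = ⟨0, by omega⟩ <;> simp [hi])
      rwa [← hw, h.una] at this
    have hmw : m ∈ intv (adjGraph D) (peak P) w := (intv_trans hc (intv_symm m1) hwm).2
    have := wpref_trans (h.prefers_chain hcard hn hc hP hww _ m w rfl
      (right_mem_intv _ _ _) hmw) hwc
    rcases this with e | e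
    · exact absurd e hmc
    · exact e

end TopRule

/-- on a non-dictatorial, unidimensional domain and for any fixed
`n ≥ 2`, existence of an anonymous, tops-only and strategy-proof rule is
equivalent to being a semi-single-peaked domain, and to the existence of a
strategy-proof projection rule. -/
theorem stmt5_anonymous_classification (D : Set (Pref A)) (hD : D.Nonempty)
    (hcard : 3 ≤ Fintype.card A) (huni : Unidimensional D)
    (hnd : ¬ DictatorialDomain D) (n : ℕ) (hn : 2 ≤ n) :
    ((∃ f : (Fin n → Pref A) → A,
        IsRule D f ∧ TopsOnly D f ∧ StrategyProof D f ∧ Anonymous D f) ↔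
      SemiSPDomain D) ∧
    ((∃ f : (Fin n → Pref A) → A,
        IsRule D f ∧ TopsOnly D f ∧ StrategyProof D f ∧ Anonymous D f) ↔
      ∃ (T : SimpleGraph A) (xbar : A), T.IsTree ∧
        StrategyProof D (fun P : Fin n → Pref A => projRule T xbar P)) := by
  have hc : (adjGraph D).Connected := huni.1
  have h12 : (∃ f : (Fin n → Pref A) → A,
        IsRule D f ∧ TopsOnly D f ∧ StrategyProof D f ∧ Anonymous D f) → SemiSPDomain D := by
    rintro ⟨f, hU, hT, hS, hA⟩
    obtain ⟨F, hF⟩ := topRule_of_rule hcard hc hU hT hS hA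
    obtain ⟨x, hx⟩ := hF.semiSP hcard hn hc
    exact ⟨adjGraph D, x, hF.isTree hcard hn hc, hx, hc⟩
  have h23 : SemiSPDomain D → ∃ (T : SimpleGraph A) (xbar : A), T.IsTree ∧
        StrategyProof D (fun P : Fin n → Pref A => projRule T xbar P) := by
    rintro ⟨T, x, hT, hsub, -⟩
    exact ⟨T, x, hT, projRule_strategyProof hT hn D x hsub⟩
  have h31 : (∃ (T : SimpleGraph A) (xbar : A), T.IsTree ∧
        StrategyProof D (fun P : Fin n → Pref A => projRule T xbar P)) →
      ∃ f : (Fin n → Pref A) → A,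
        IsRule D f ∧ TopsOnly D f ∧ StrategyProof D f ∧ Anonymous D f := by
    rintro ⟨T, x, hT, hS⟩
    exact ⟨_, projRule_isRule hT hn D x, projRule_topsOnly T D x, hS, projRule_anonymous T D x⟩
  exact ⟨⟨h12, fun h => h31 (h23 h)⟩, ⟨fun h => h23 (h12 h), h31⟩⟩
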